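/- For every simple graph H with t vertices and q edges, every simple graph G with average degree at least 7.477·t + 2.375·q contains H as a minor. -/

import Mathlib

/-!
Write `t` and `q` for the numbers of vertices and edges of `H` and put `D = 7.477 t + 2.375 q`.
The proof has two halves: a graph of average degree at least `D` has a minor `J` that is dense
relative to its own order (`exists_dense_minor`), and every such `J` has `H` as a minor
(`isMinorOf_of_degree`).

*A dense minor.* Let `F` be a real function and let `G'` be a minor of `G` that is minimal subject
to `e(G') ≥ F(|G'|)` and a lower bound on `|G'|` (`exists_reduced`). Comparison with the graphs
obtained by deleting an edge, deleting a vertex or contracting an edge shows that `e(G')` is about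
`F(|G'|)`, that all degrees exceed the increment `F(|G'|) - F(|G'| - 1)`, and that every edge lies
in about that many triangles. The neighbourhood of a vertex of minimum degree therefore has order
about at most `2 F(n) / n` and minimum degree about at least `F'(n)`, where `n = |G'|`.
This is used twice. The linear `F(x) = D x / 2` gives a graph on `n₀ ≤ D + 0.13` vertices with
minimum degree greater than `D / 2 - 1`. The quadratic `F = quad D`, approximately
`0.085 x² + 0.1835 D x - 0.0185 D²`, then gives `J` with `m` vertices and minimum degree `δ`, where
`2 δ - m` is about `2 (F'(n) - F(n) / n) = 2 (0.085 n + 0.0185 D² / n)`, which is at least `0.1586 D`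
by the inequality of arithmetic and geometric means. The constants are chosen so that `F(n₀)` is at
most the number of edges available, while `F(x)` exceeds `x (x - 1) / 2` for `x` just above `0.2 D`,
so that the minimal graph cannot be too small (`quad_barrier`).

*Embedding `H`.* Place the vertices of `H` on distinct vertices of `J` at random. Each edge of `H`
falls on a non-adjacent pair with probability at most `(m - 1 - δ) / (m - 1)`, so some placement
leaves `X ≤ q (m - 1 - δ) / (m - 1)` edges of `H` unrealised (`exists_placement`). Two non-adjacent
vertices of `J` have at least `2 δ - m + 2` common neighbours, at most `t - 2` of which are occupied.
If `m + t + X ≤ 2 δ + 4`, then at least `X` free ones remain for each unrealised edge, so Hall's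
theorem picks distinct common neighbours to serve as subdivision vertices (`embed`).
-/

open SimpleGraph

/-- `H` is a minor of `G`: there is a minor model of `H` in `G`, i.e. pairwise disjoint
connected (nonempty) branch sets in `G`, one for each vertex of `H`, with an edge of `G`
between the branch sets of any two adjacent vertices of `H`.  Equivalently, a graph
isomorphic to `H` can be obtained from a subgraph of `G` by contracting edges. -/
def SimpleGraph.IsMinorOf {W V : Type*} (H : SimpleGraph W) (G : SimpleGraph V) : Prop :=
  ∃ B : W → Set V,
    (∀ w, (G.induce (B w)).Connected) ∧
    (Pairwise fun w₁ w₂ => Disjoint (B w₁) (B w₂)) ∧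
    ∀ ⦃w₁ w₂⦄, H.Adj w₁ w₂ → ∃ v₁ ∈ B w₁, ∃ v₂ ∈ B w₂, G.Adj v₁ v₂

/-- The average degree `2m/n` of a graph with `n` vertices and `m` edges. -/
noncomputable def SimpleGraph.averageDegree {V : Type*} (G : SimpleGraph V) : ℝ :=
  2 * G.edgeSet.ncard / Nat.card V

/-! ### Minors: transitivity, injections and edge contraction -/

namespace SparseMinor
universe u

/-- The minor relation is transitive: the branch set of `w` in `G₂` is the union of the branch sets
of the vertices of `G₁` that make up the branch set of `w` in `G₁`. -/
theorem trans {W V₁ V₂ : Type*} {H : SimpleGraph W} {G₁ : SimpleGraph V₁}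
    {G₂ : SimpleGraph V₂} (h₁ : H.IsMinorOf G₁) (h₂ : G₁.IsMinorOf G₂) : H.IsMinorOf G₂ := by
  obtain ⟨B, hBc, hBd, hBa⟩ := h₁
  obtain ⟨C, hCc, hCd, hCa⟩ := h₂
  refine ⟨fun w => ⋃ x ∈ B w, C x, fun w => ?_, fun w₁ w₂ hw => ?_, fun w₁ w₂ hw => ?_⟩
  · have hsub : ∀ x : B w, C x ⊆ ⋃ x ∈ B w, C x := fun x => Set.subset_biUnion_of_mem x.2
    have inner : ∀ (x : B w) (p q : V₂) (hp : p ∈ C x) (hq : q ∈ C x),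
        (G₂.induce (⋃ x ∈ B w, C x)).Reachable ⟨p, hsub x hp⟩ ⟨q, hsub x hq⟩ := by
      intro x p q hp hq
      exact ((hCc x).preconnected ⟨p, hp⟩ ⟨q, hq⟩).map (G₂.induceHomOfLE (hsub x)).toHom
    have outer : ∀ x y : B w, (G₁.induce (B w)).Reachable x y →
        ∀ (p q : V₂) (hp : p ∈ C x) (hq : q ∈ C y),
        (G₂.induce (⋃ x ∈ B w, C x)).Reachable ⟨p, hsub x hp⟩ ⟨q, hsub y hq⟩ := by
      rintro x y ⟨W⟩
      induction W with
      | nil => exact inner _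
      | @cons a b c hab _ ih =>
        intro p q hp hq
        obtain ⟨r, hr, s, hs, hrs⟩ := hCa (show G₁.Adj a b from hab)
        refine (inner a p r hp hr).trans (Reachable.trans ?_ (ih s q hs hq))
        exact Adj.reachable (show G₂.Adj r s from hrs)
    have : Nonempty (⋃ x ∈ B w, C x : Set V₂) := by
      obtain ⟨x⟩ := (hBc w).nonempty
      obtain ⟨p⟩ := (hCc x).nonempty
      exact ⟨⟨p, hsub x p.2⟩⟩
    refine ⟨?_⟩
    rintro ⟨p, hp⟩ ⟨q, hq⟩
    obtain ⟨x, hx, hpx⟩ := Set.mem_iUnion₂.1 hp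
    obtain ⟨y, hy, hqy⟩ := Set.mem_iUnion₂.1 hq
    exact outer ⟨x, hx⟩ ⟨y, hy⟩ ((hBc w).preconnected _ _) p q hpx hqy
  · simp only [Set.disjoint_iUnion_left, Set.disjoint_iUnion_right]
    intro x hx y hy
    exact hCd fun h => (Set.disjoint_left.1 (hBd hw)) hy (h ▸ hx)
  · obtain ⟨x, hx, y, hy, hxy⟩ := hBa hw
    obtain ⟨p, hp, q, hq, hpq⟩ := hCa hxy
    exact ⟨p, Set.mem_biUnion hx hp, q, Set.mem_biUnion hy hq, hpq⟩

/-- Subgraphs are minors, with singletons as branch sets. -/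
theorem ofInjective {W V : Type*} {H : SimpleGraph W} {G : SimpleGraph V} (f : W → V)
    (hf : Function.Injective f) (hadj : ∀ x y, H.Adj x y → G.Adj (f x) (f y)) :
    H.IsMinorOf G := by
  refine ⟨fun w => {f w}, fun w => ?_, fun w₁ w₂ hw => ?_, fun w₁ w₂ hw => ?_⟩
  · have : Nonempty ({f w} : Set V) := ⟨⟨f w, rfl⟩⟩
    exact ⟨Preconnected.of_subsingleton⟩
  · simpa using fun h => hw (hf h)
  · exact ⟨_, rfl, _, rfl, hadj _ _ hw⟩

open Classical in
/-- The map of vertices that identifies `v` with `u` and fixes every other vertex. -/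
noncomputable def retract {V : Type*} {u v : V} (huv : u ≠ v) (x : V) : {x : V // x ≠ v} :=
  if h : x = v then ⟨u, huv⟩ else ⟨x, h⟩

/-- The contraction of the pair `u v`, on the vertices other than `v`: the simple graph whose edges
are the images of the edges of `G` under `retract`, with loops dropped. -/
def contract {V : Type*} (G : SimpleGraph V) {u v : V} (huv : u ≠ v) :
    SimpleGraph {x : V // x ≠ v} :=
  SimpleGraph.fromRel fun a b => ∃ x y, G.Adj x y ∧ retract huv x = a ∧ retract huv y = b

theorem contract_adj {V : Type*} (G : SimpleGraph V) {u v : V} (huv : u ≠ v)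
    (a b : {x : V // x ≠ v}) : (contract G huv).Adj a b ↔
      a ≠ b ∧ ∃ x y, G.Adj x y ∧ retract huv x = a ∧ retract huv y = b := by
  rw [contract, SimpleGraph.fromRel_adj]
  refine and_congr_right fun _ => ⟨?_, Or.inl⟩
  rintro (h | ⟨x, y, h, hx, hy⟩)
  · exact h
  · exact ⟨y, x, h.symm, hy, hx⟩

theorem contract_isMinorOf {V : Type*} (G : SimpleGraph V) {u v : V} (huv : G.Adj u v) :
    (contract G huv.ne).IsMinorOf G := by
  refine ⟨fun a => {x | retract huv.ne x = a}, fun a => ?_, fun a b hab => ?_, fun a b hab => ?_⟩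
  · have ha : retract huv.ne a.1 = a := by simp [retract, a.2]
    have key : ∀ x : {x | retract huv.ne x = a},
        (G.induce {x | retract huv.ne x = a}).Reachable ⟨a.1, ha⟩ x := by
      rintro ⟨x, hx⟩
      by_cases h : x = v
      · subst h
        have : a.1 = u := by
          have h2 : retract huv.ne x = a := hx
          rw [← h2]; simp [retract]
        refine Adj.reachable ?_
        show G.Adj a.1 x
        rw [this]; exact huv
      · have : a.1 = x := by
          have h2 : retract huv.ne x = a := hx
          rw [← h2]; simp [retract, h]
        subst this
        exact Reachable.refl _
    have : Nonempty {x | retract huv.ne x = a} := ⟨⟨a.1, ha⟩⟩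
    exact ⟨fun x y => (key x).symm.trans (key y)⟩
  · refine Set.disjoint_left.2 ?_
    intro x hx hy
    exact hab (hx.symm.trans hy)
  · obtain ⟨-, x, y, hxy, hx, hy⟩ := (contract_adj G huv.ne a b).1 hab
    exact ⟨x, hx, y, hy, hxy⟩

/-- Contracting an edge `uv` loses that edge and one further edge for each triangle containing it:
`retract` is injective on the edges other than `uv` and the edges from `v` to common neighbours. -/
theorem edges_contract {V : Type*} [Finite V] (G : SimpleGraph V) {u v : V} (huv : G.Adj u v) :
    G.edgeSet.ncard ≤
      (contract G huv.ne).edgeSet.ncard + (G.commonNeighbors u v).ncard + 1 := by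
  classical
  set R : Set (Sym2 V) := insert s(u, v) ((fun c => s(v, c)) '' G.commonNeighbors u v) with hR
  have hRc : R.ncard ≤ (G.commonNeighbors u v).ncard + 1 :=
    (Set.ncard_insert_le _ _).trans (Nat.add_le_add_right (Set.ncard_image_le (Set.toFinite _)) 1)
  have h1 : (G.edgeSet \ R).ncard ≤ (contract G huv.ne).edgeSet.ncard := by
    refine Set.ncard_le_ncard_of_injOn (Sym2.map (retract huv.ne)) ?_ ?_ (Set.toFinite _)
    · intro e
      induction e using Sym2.inductionOn with | hf x y => ?_
      rintro ⟨hxy, hn⟩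
      rw [SimpleGraph.mem_edgeSet] at hxy
      rw [Sym2.map_mk, SimpleGraph.mem_edgeSet, contract_adj]
      refine ⟨?_, x, y, hxy, rfl, rfl⟩
      simp only [hR, Set.mem_insert_iff] at hn
      intro h
      have := hxy.ne
      simp only [retract] at h
      grind [Sym2.eq_swap]
    · intro e he e' he'
      induction e using Sym2.inductionOn with | hf x y => ?_
      induction e' using Sym2.inductionOn with | hf x' y' => ?_
      obtain ⟨hxy, hn⟩ := he
      obtain ⟨hxy', hn'⟩ := he'
      rw [SimpleGraph.mem_edgeSet] at hxy hxy'
      have hc : ∀ a b, G.Adj a b → s(a, b) ∉ R → a = v → b ≠ u ∧ ¬ G.Adj u b := by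
        rintro a b hab h rfl
        refine ⟨?_, ?_⟩
        · rintro rfl
          exact h (Or.inl Sym2.eq_swap)
        · intro hu
          exact h (Or.inr ⟨b, ⟨hu, hab⟩, rfl⟩)
      have c1 := hc x y hxy hn
      have c2 := hc y x hxy.symm (by rwa [Sym2.eq_swap])
      have c3 := hc x' y' hxy' hn'
      have c4 := hc y' x' hxy'.symm (by rwa [Sym2.eq_swap])
      have e1 := hxy.ne
      have e2 := hxy'.ne
      have a1 := hxy.symm
      have a2 := hxy'.symm
      clear hn hn' hc hRc hR
      simp only [Sym2.map_mk, Sym2.eq_iff, retract]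
      intro h
      grind
  have h2 : G.edgeSet.ncard ≤ (G.edgeSet \ R).ncard + R.ncard :=
    Set.ncard_le_ncard_sdiff_add_ncard _ _ (Set.toFinite _)
  omega


/-! ### Counting edges and degrees -/

theorem two_mul_ncard_edgeSet {V : Type*} [Fintype V] (G : SimpleGraph V) :
    2 * G.edgeSet.ncard = ∑ v, (G.neighborSet v).ncard := by
  classical
  rw [← SimpleGraph.coe_edgeFinset, Set.ncard_coe_finset, ← G.sum_degrees_eq_twice_card_edges]
  refine Finset.sum_congr rfl fun v _ => ?_
  rw [← SimpleGraph.card_neighborSet_eq_degree, ← Nat.card_eq_fintype_card, Nat.card_coe_set_eq]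

theorem ncard_edgeSet_le {V : Type*} [Fintype V] (G : SimpleGraph V) :
    (G.edgeSet.ncard : ℝ) ≤ (Nat.card V : ℝ) * ((Nat.card V : ℝ) - 1) / 2 := by
  classical
  rw [← SimpleGraph.coe_edgeFinset, Set.ncard_coe_finset, ← Nat.cast_choose_two,
    Nat.card_eq_fintype_card]
  exact_mod_cast G.card_edgeFinset_le_card_choose_two

theorem mul_card_le {V : Type*} [Fintype V] (G : SimpleGraph V) (δ : ℝ)
    (h : ∀ v, δ ≤ (G.neighborSet v).ncard) : δ * Nat.card V ≤ 2 * G.edgeSet.ncard := by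
  have h1 : (2 * G.edgeSet.ncard : ℝ) = ∑ v, ((G.neighborSet v).ncard : ℝ) := by
    exact_mod_cast two_mul_ncard_edgeSet G
  rw [h1, Nat.card_eq_fintype_card, mul_comm, ← nsmul_eq_mul, ← Finset.card_univ]
  exact Finset.card_nsmul_le_sum _ _ _ fun v _ => h v

/-- Some vertex has degree at most the average degree. -/
theorem exists_mul_card_le {V : Type*} [Fintype V] [Nonempty V] (G : SimpleGraph V) :
    ∃ v, ((G.neighborSet v).ncard : ℝ) * Nat.card V ≤ 2 * G.edgeSet.ncard := by
  obtain ⟨v, hv⟩ := Finite.exists_min fun v => (G.neighborSet v).ncard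
  exact ⟨v, mul_card_le G _ fun w => by exact_mod_cast hv w⟩

theorem edges_induce_compl {V : Type*} [Fintype V] (G : SimpleGraph V) (v : V) :
    G.edgeSet.ncard ≤ (G.induce {x | x ≠ v}).edgeSet.ncard + (G.neighborSet v).ncard := by
  classical
  have h1 : (G.edgeSet \ G.incidenceSet v).ncard ≤ (G.induce {x | x ≠ v}).edgeSet.ncard := by
    have : G.edgeSet \ G.incidenceSet v ⊆
        Sym2.map (Subtype.val : {x | x ≠ v} → V) '' (G.induce {x | x ≠ v}).edgeSet := by
      intro e
      induction e using Sym2.inductionOn with | hf x y => ?_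
      rintro ⟨hxy, hn⟩
      rw [SimpleGraph.mem_edgeSet] at hxy
      rw [SimpleGraph.mk'_mem_incidenceSet_iff] at hn
      exact ⟨s(⟨x, by grind⟩, ⟨y, by grind⟩), hxy, rfl⟩
    exact (Set.ncard_le_ncard this (Set.toFinite _)).trans (Set.ncard_image_le (Set.toFinite _))
  have h2 : (G.incidenceSet v).ncard = (G.neighborSet v).ncard :=
    Nat.card_congr (G.incidenceSetEquivNeighborSet v)
  have h3 := Set.ncard_le_ncard_sdiff_add_ncard G.edgeSet (G.incidenceSet v) (Set.toFinite _)
  omega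

theorem ncard_neighborSet_induce {V : Type*} (G : SimpleGraph V) (v : V)
    (x : G.neighborSet v) : ((G.induce (G.neighborSet v)).neighborSet x).ncard =
      (G.commonNeighbors v x).ncard := by
  rw [← Set.ncard_image_of_injective _ Subtype.val_injective]
  congr 1
  ext y
  constructor
  · rintro ⟨z, hz, rfl⟩
    exact ⟨z.2, hz⟩
  · rintro ⟨h1, h2⟩
    exact ⟨⟨y, h1⟩, h2, rfl⟩

/-! ### Minimal dense minors -/

/-- The properties of a graph that is minimal, under edge deletion, vertex deletion and edge
contraction, among the graphs `G` with `F(|G|) ≤ e(G)` and `k ≤ |G|`. The bounds that come from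
removing a vertex need `k ≤ |G| - 1`, and the one that comes from deleting an edge needs
`0 ≤ F(|G|)`, which provides an edge to delete. -/
structure Reduced {V : Type*} (G : SimpleGraph V) (F : ℝ → ℝ) (k : ℝ) : Prop where
  le_card : k ≤ Nat.card V
  le_edges : F (Nat.card V) ≤ G.edgeSet.ncard
  edges_lt : 0 ≤ F (Nat.card V) → G.edgeSet.ncard < F (Nat.card V) + 1
  lt_degree : k ≤ (Nat.card V : ℝ) - 1 →
    ∀ v, F (Nat.card V) - F ((Nat.card V : ℝ) - 1) < (G.neighborSet v).ncard
  lt_common : k ≤ (Nat.card V : ℝ) - 1 → ∀ u v, G.Adj u v →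
    F (Nat.card V) - F ((Nat.card V : ℝ) - 1) < (G.commonNeighbors u v).ncard + 1

theorem exists_reduced {V : Type u} [Fintype V] (G : SimpleGraph V) (F : ℝ → ℝ) (k : ℝ)
    (hk : k ≤ Nat.card V) (hF : F (Nat.card V) ≤ G.edgeSet.ncard) :
    ∃ (V' : Type u) (_ : Fintype V') (G' : SimpleGraph V'), G'.IsMinorOf G ∧
      Nat.card V' ≤ Nat.card V ∧ Reduced G' F k := by
  classical
  induction hN : Nat.card V + G.edgeSet.ncard using Nat.strong_induction_on generalizing V with
  | _ N ih =>
  subst hN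
  by_contra hno
  have step : ∀ (V₂ : Type u) (_ : Fintype V₂) (G₂ : SimpleGraph V₂), G₂.IsMinorOf G →
      Nat.card V₂ ≤ Nat.card V → Nat.card V₂ + G₂.edgeSet.ncard < Nat.card V + G.edgeSet.ncard →
      k ≤ Nat.card V₂ → F (Nat.card V₂) ≤ G₂.edgeSet.ncard → False := by
    intro V₂ _ G₂ hm hle hlt hk₂ hF₂
    obtain ⟨V', i, G', h1, h2, h3⟩ := ih _ hlt G₂ hk₂ hF₂ rfl
    exact hno ⟨V', i, G', trans h1 hm, h2.trans hle, h3⟩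
  have hcard : ∀ v : V, Nat.card {x : V // x ≠ v} + 1 = Nat.card V := by
    intro v
    have := Nat.card_pos_iff.2 ⟨⟨v⟩, inferInstanceAs (Finite V)⟩
    simp only [Nat.card_eq_fintype_card] at this ⊢
    rw [Fintype.card_subtype_compl, Fintype.card_subtype_eq]
    omega
  refine hno ⟨V, inferInstance, G, ofInjective id Function.injective_id fun _ _ h => h, le_rfl,
    hk, hF, fun h0 => ?_, fun hk' v => ?_, fun hk' u v huv => ?_⟩
  · by_contra! hE
    have hpos : (0 : ℝ) < G.edgeSet.ncard := by linarith
    obtain ⟨e, he⟩ := (Set.ncard_pos (Set.toFinite _)).1 (Nat.cast_pos.1 hpos)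
    have hc : (G.deleteEdges {e}).edgeSet.ncard + 1 = G.edgeSet.ncard := by
      rw [SimpleGraph.edgeSet_deleteEdges]
      exact Set.ncard_sdiff_singleton_add_one he (Set.toFinite _)
    refine step V inferInstance (G.deleteEdges {e}) ?_ le_rfl (by omega) hk ?_
    · exact ofInjective id Function.injective_id fun x y h => G.deleteEdges_le _ h
    · rw [← hc] at hE; push_cast at hE; linarith
  · by_contra! hE
    have h1 : Nat.card ({x | x ≠ v} : Set V) + 1 = Nat.card V := hcard v
    have h2 : (Nat.card V : ℝ) - 1 = Nat.card ({x | x ≠ v} : Set V) := by rw [← h1]; push_cast; ring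
    have h3 := edges_induce_compl G v
    have h4 : (G.induce {x | x ≠ v}).edgeSet.ncard ≤ G.edgeSet.ncard := by
      rw [← Set.ncard_image_of_injective _ (Sym2.map.injective Subtype.val_injective)]
      refine Set.ncard_le_ncard ?_ (Set.toFinite _)
      rintro _ ⟨e, he, rfl⟩
      induction e using Sym2.inductionOn with | hf x y => exact he
    rw [h2] at hk' hE
    refine step ({x | x ≠ v} : Set V) inferInstance (G.induce {x | x ≠ v}) ?_ (by omega) (by omega)
      hk' ?_
    · exact ofInjective Subtype.val Subtype.val_injective fun _ _ h => h
    · have : (G.edgeSet.ncard : ℝ) ≤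
        (G.induce {x | x ≠ v}).edgeSet.ncard + (G.neighborSet v).ncard := by exact_mod_cast h3
      linarith
  · by_contra! hE
    have h1 := hcard v
    have h2 : (Nat.card V : ℝ) - 1 = Nat.card {x : V // x ≠ v} := by rw [← h1]; push_cast; ring
    have h3 := edges_contract G huv
    have h4 : (contract G huv.ne).edgeSet.ncard ≤ G.edgeSet.ncard := by
      rw [← Set.ncard_image_of_injective G.edgeSet Function.injective_id]
      have : (contract G huv.ne).edgeSet ⊆ Sym2.map (retract huv.ne) '' G.edgeSet := by
        intro e
        induction e using Sym2.inductionOn with | hf a b => ?_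
        intro he
        obtain ⟨-, x, y, hxy, rfl, rfl⟩ := (contract_adj G huv.ne a b).1 he
        exact ⟨s(x, y), hxy, rfl⟩
      simpa using (Set.ncard_le_ncard this (Set.toFinite _)).trans
        (Set.ncard_image_le (Set.toFinite _))
    rw [h2] at hk' hE
    refine step {x : V // x ≠ v} inferInstance (contract G huv.ne) (contract_isMinorOf G huv)
      (by omega) (by omega) hk' ?_
    have : (G.edgeSet.ncard : ℝ) ≤ (contract G huv.ne).edgeSet.ncard +
        (G.commonNeighbors u v).ncard + 1 := by exact_mod_cast h3
    linarith

/-! ### Embedding a sparse graph in a dense one -/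

/-- Let all degrees of `G` be at least `δ`, and let `X` be the number of edges of `H` that `φ` does
not send to edges of `G`. If `|G| + |H| + X ≤ 2 δ + 4`, then these edges can be realised by paths of
length two whose midpoints are distinct and avoid the range of `φ`. -/
theorem embed {W V : Type*} [Fintype W] [Fintype V] (H : SimpleGraph W) (G : SimpleGraph V)
    (φ : W → V) (hφ : Function.Injective φ) (δ : ℕ)
    (hδ : ∀ v, δ ≤ (G.neighborSet v).ncard)
    (hX : Nat.card V + Nat.card W +
      {e ∈ H.edgeSet | e.map φ ∉ G.edgeSet}.ncard ≤ 2 * δ + 4) : H.IsMinorOf G := by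
  classical
  set S : Set (Sym2 W) := {e ∈ H.edgeSet | e.map φ ∉ G.edgeSet} with hS
  let N : S → Finset V := fun e =>
    Finset.univ.filter fun z => (∀ w ∈ e.1, G.Adj (φ w) z) ∧ z ∉ Set.range φ
  -- Both ends of an unrealised edge lie outside the union of their neighbourhoods, and their images
  -- are not among their own common neighbours; this saves the constant `4` in `hX`.
  have hN : ∀ e, S.ncard ≤ (N e).card := by
    rintro ⟨e, he⟩
    induction e using Sym2.inductionOn with | hf a b => ?_
    obtain ⟨hab, hn⟩ := he
    rw [SimpleGraph.mem_edgeSet] at hab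
    rw [Sym2.map_mk, SimpleGraph.mem_edgeSet] at hn
    have ha := hδ (φ a)
    have hb := hδ (φ b)
    set A := G.neighborSet (φ a)
    set C := G.neighborSet (φ b)
    have h1 : (A ∪ C).ncard + (A ∩ C).ncard = A.ncard + C.ncard := Set.ncard_union_add_ncard_inter _ _
    have hφab : φ a ≠ φ b := fun h => hab.ne (hφ h)
    have h2 : (A ∪ C).ncard + 2 ≤ Nat.card V := by
      rw [← Set.ncard_pair hφab, ← Set.ncard_union_eq]
      · exact Set.ncard_le_card _
      · rw [Set.disjoint_right]
        rintro x (rfl | rfl) (h | h)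
        · exact G.loopless.irrefl _ h
        · exact hn (G.adj_symm h)
        · exact hn h
        · exact G.loopless.irrefl _ h
    have h3 : (A ∩ C) ⊆ ↑(N ⟨s(a, b), ⟨hab, hn⟩⟩) ∪ φ '' {w | w ≠ a ∧ w ≠ b} := by
      rintro z ⟨hza, hzb⟩
      by_cases hz : z ∈ Set.range φ
      · obtain ⟨w, rfl⟩ := hz
        refine Or.inr ⟨w, ⟨?_, ?_⟩, rfl⟩
        · rintro rfl; exact G.loopless.irrefl _ hza
        · rintro rfl; exact G.loopless.irrefl _ hzb
      · left
        simp only [N, Finset.coe_filter, Set.mem_ofPred_eq, Finset.mem_univ, true_and]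
        refine ⟨fun w hw => ?_, hz⟩
        rcases Sym2.mem_iff.1 hw with rfl | rfl
        · exact hza
        · exact hzb
    have h4 := (Set.ncard_le_ncard h3 (Set.toFinite _)).trans (Set.ncard_union_le _ _)
    rw [Set.ncard_coe_finset] at h4
    have h5 : (φ '' {w | w ≠ a ∧ w ≠ b}).ncard + 2 ≤ Nat.card W := by
      rw [Set.ncard_image_of_injective _ hφ, ← Set.ncard_pair hab.ne, ← Set.ncard_union_eq]
      · exact Set.ncard_le_card _
      · rw [Set.disjoint_right]
        rintro x (rfl | rfl) ⟨h, h'⟩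
        · exact h rfl
        · exact h' rfl
    omega
  obtain ⟨z, hzi, hz⟩ := (Finset.all_card_le_biUnion_card_iff_exists_injective N).1 (by
    intro s
    rcases s.eq_empty_or_nonempty with rfl | ⟨e, he⟩
    · simp
    · calc s.card ≤ Fintype.card S := Finset.card_le_univ _
        _ = S.ncard := by rw [← Nat.card_eq_fintype_card, Nat.card_coe_set_eq]
        _ ≤ (N e).card := hN e
        _ ≤ _ := Finset.card_le_card (Finset.subset_biUnion_of_mem N he))
  simp only [N, Finset.mem_filter, Finset.mem_univ, true_and, Set.mem_range, not_exists] at hz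
  -- The midpoint for `e` joins the branch set of the end of `e` chosen by `Sym2.out`.
  refine ⟨fun w => insert (φ w) (z '' {e | e.1.out.1 = w}), fun w => ?_, fun w₁ w₂ hw => ?_,
    fun a b hab => ?_⟩
  · have key : ∀ x : (insert (φ w) (z '' {e | e.1.out.1 = w}) : Set V),
        (G.induce (insert (φ w) (z '' {e | e.1.out.1 = w}))).Reachable
          ⟨φ w, Set.mem_insert _ _⟩ x := by
      rintro ⟨x, rfl | ⟨e, he, rfl⟩⟩
      · exact Reachable.refl _
      · refine Adj.reachable ?_
        show G.Adj (φ w) (z e)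
        refine (hz e).1 w ?_
        rw [← show e.1.out.1 = w from he]
        exact Sym2.out_fst_mem _
    have : Nonempty (insert (φ w) (z '' {e | e.1.out.1 = w}) : Set V) :=
      ⟨⟨φ w, Set.mem_insert _ _⟩⟩
    exact ⟨fun x y => (key x).symm.trans (key y)⟩
  · refine Set.disjoint_left.2 ?_
    rintro x (rfl | ⟨e, he, rfl⟩) (h | ⟨e', he', h⟩)
    · exact hw (hφ h)
    · exact (hz e').2 _ h.symm
    · exact (hz e).2 _ h.symm
    · rw [← hzi h] at he
      exact hw (he.symm.trans he')
  · by_cases h : G.Adj (φ a) (φ b)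
    · exact ⟨_, Or.inl rfl, _, Or.inl rfl, h⟩
    · let e : S := ⟨s(a, b), hab, h⟩
      have hm : e.1.out.1 ∈ s(a, b) := Sym2.out_fst_mem e.1
      have hza := (hz e).1 a (Sym2.mem_mk_left _ _)
      have hzb := (hz e).1 b (Sym2.mem_mk_right _ _)
      rcases Sym2.mem_iff.1 hm with h' | h'
      · exact ⟨z e, Or.inr ⟨e, h', rfl⟩, φ b, Or.inl rfl, hzb.symm⟩
      · exact ⟨φ a, Or.inl rfl, z e, Or.inr ⟨e, h', rfl⟩, hza⟩

/-- A uniformly random permutation of `V` sends two distinct vertices to a non-adjacent pair with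
probability at most `(|V| - 1 - δ) / (|V| - 1)`. The probability does not depend on the second
vertex, so it can be averaged over all vertices other than the first. -/
theorem sum_nonadj_le {V : Type*} [Fintype V] [DecidableEq V] (G : SimpleGraph V)
    [DecidableRel G.Adj] (δ : ℕ) (hδ : ∀ v, δ ≤ (G.neighborSet v).ncard) {x y : V} (hxy : x ≠ y) :
    (∑ σ : Equiv.Perm V, if G.Adj (σ x) (σ y) then (0 : ℝ) else 1) * (Nat.card V - 1) ≤
      Fintype.card (Equiv.Perm V) * (Nat.card V - 1 - δ) := by
  have hconst : ∀ z ∈ Finset.univ.erase x,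
      (∑ σ : Equiv.Perm V, if G.Adj (σ x) (σ z) then (0 : ℝ) else 1) =
      ∑ σ : Equiv.Perm V, if G.Adj (σ x) (σ y) then (0 : ℝ) else 1 := by
    intro z hz
    have hzx : z ≠ x := Finset.ne_of_mem_erase hz
    refine Fintype.sum_equiv (Equiv.mulRight (Equiv.swap y z)) _ _ fun σ => ?_
    simp [Equiv.swap_apply_of_ne_of_ne hxy hzx.symm]
  have hcard : ((Finset.univ.erase x).card : ℝ) = Nat.card V - 1 := by
    rw [Finset.cast_card_erase_of_mem (Finset.mem_univ x), Finset.card_univ,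
      Nat.card_eq_fintype_card]
  have hrow : ∀ σ : Equiv.Perm V,
      (∑ z ∈ Finset.univ.erase x, if G.Adj (σ x) (σ z) then (0 : ℝ) else 1) ≤
        Nat.card V - 1 - δ := by
    intro σ
    have h1 : (∑ z ∈ Finset.univ.erase x, if G.Adj (σ x) (σ z) then (1 : ℝ) else 0) =
        (G.neighborSet (σ x)).ncard := by
      have : ∑ z ∈ Finset.univ.erase x, (if G.Adj (σ x) (σ z) then (1 : ℝ) else 0) =
          ∑ z, if G.Adj (σ x) (σ z) then (1 : ℝ) else 0 :=
        Finset.sum_erase _ (by simp)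
      rw [this, Equiv.sum_comp σ fun z => if G.Adj (σ x) z then (1 : ℝ) else 0,
        Finset.sum_boole, ← Set.ncard_coe_finset]
      congr 2
      ext z
      simp
    have h2 : (∑ z ∈ Finset.univ.erase x, if G.Adj (σ x) (σ z) then (0 : ℝ) else 1) +
        (∑ z ∈ Finset.univ.erase x, if G.Adj (σ x) (σ z) then (1 : ℝ) else 0) =
          Nat.card V - 1 := by
      rw [← Finset.sum_add_distrib, ← hcard, Finset.card_eq_sum_ones, Nat.cast_sum]
      refine Finset.sum_congr rfl fun z _ => ?_
      split_ifs <;> simp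
    have h3 : (δ : ℝ) ≤ (G.neighborSet (σ x)).ncard := by exact_mod_cast hδ (σ x)
    linarith
  calc _ = ∑ z ∈ Finset.univ.erase x,
        ∑ σ : Equiv.Perm V, (if G.Adj (σ x) (σ z) then (0 : ℝ) else 1) := by
        rw [Finset.sum_congr rfl hconst, Finset.sum_const, nsmul_eq_mul, hcard, mul_comm]
    _ = ∑ σ : Equiv.Perm V, ∑ z ∈ Finset.univ.erase x,
        (if G.Adj (σ x) (σ z) then (0 : ℝ) else 1) := Finset.sum_comm
    _ ≤ ∑ _σ : Equiv.Perm V, ((Nat.card V : ℝ) - 1 - δ) := Finset.sum_le_sum fun σ _ => hrow σ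
    _ = _ := by rw [Finset.sum_const, nsmul_eq_mul, Finset.card_univ]

/-- The first moment argument: some injection leaves at most the expected number of edges of `H`
unrealised. -/
theorem exists_placement {W V : Type*} [Fintype W] [Fintype V] (H : SimpleGraph W)
    (G : SimpleGraph V) (δ : ℕ) (hδ : ∀ v, δ ≤ (G.neighborSet v).ncard)
    (hWV : Nat.card W ≤ Nat.card V) : ∃ φ : W → V, Function.Injective φ ∧
      ({e ∈ H.edgeSet | e.map φ ∉ G.edgeSet}.ncard : ℝ) * (Nat.card V - 1) ≤
        H.edgeSet.ncard * (Nat.card V - 1 - δ) := by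
  classical
  obtain ⟨φ⟩ : Nonempty (W ↪ V) := by
    rw [Function.Embedding.nonempty_iff_card_le]
    simpa using hWV
  have hcount : ∀ σ : Equiv.Perm V,
      ({e ∈ H.edgeSet | e.map (σ ∘ φ) ∉ G.edgeSet}.ncard : ℝ) =
        ∑ e ∈ H.edgeFinset, if e.map (σ ∘ φ) ∈ G.edgeSet then (0 : ℝ) else 1 := by
    intro σ
    have : {e ∈ H.edgeSet | e.map (σ ∘ φ) ∉ G.edgeSet} =
        ↑(H.edgeFinset.filter fun e => e.map (σ ∘ φ) ∉ G.edgeSet) := by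
      ext e; simp
    rw [this, Set.ncard_coe_finset, ← Finset.sum_boole]
    refine Finset.sum_congr rfl fun e _ => ?_
    split_ifs <;> simp_all
  obtain ⟨σ, -, hσ⟩ := Finset.exists_le_of_sum_le (s := (Finset.univ : Finset (Equiv.Perm V)))
    (f := fun σ : Equiv.Perm V => ({e ∈ H.edgeSet | e.map (σ ∘ φ) ∉ G.edgeSet}.ncard : ℝ) * (Nat.card V - 1))
    (g := fun _ => (H.edgeSet.ncard : ℝ) * (Nat.card V - 1 - δ)) Finset.univ_nonempty (by
      simp_rw [hcount]
      rw [← Finset.sum_mul, Finset.sum_comm, Finset.sum_mul, Finset.sum_const, nsmul_eq_mul,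
        Finset.card_univ, ← SimpleGraph.coe_edgeFinset H, Set.ncard_coe_finset,
        mul_left_comm, ← nsmul_eq_mul (H.edgeFinset.card)]
      refine Finset.sum_le_card_nsmul _ _ _ fun e he => ?_
      induction e using Sym2.inductionOn with | hf a b => ?_
      have hab : φ a ≠ φ b := fun h => (H.ne_of_adj (by simpa using he)) (φ.injective h)
      simpa using sum_nonadj_le G δ hδ hab)
  exact ⟨σ ∘ φ, σ.injective.comp φ.injective, hσ⟩

/-- A graph on `m ≤ D / 2 + 1` vertices with all degrees at least `δ`, where `2 δ - m` is at least
`0.1586 D - 2.84`, satisfies the hypothesis of `embed` for the placement of `exists_placement`. -/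
theorem isMinorOf_of_degree {W V : Type*} [Fintype W] [Fintype V] (H : SimpleGraph W)
    (G : SimpleGraph V) (δ : ℕ) (hδ : ∀ v, δ ≤ (G.neighborSet v).ncard) (D : ℝ)
    (hD : D = 7.477 * Nat.card W + 2.375 * H.edgeSet.ncard) (hD0 : 14.9 ≤ D)
    (hm : 2 ≤ Nat.card V) (hWV : Nat.card W ≤ Nat.card V) (hmD : (Nat.card V : ℝ) - 1 ≤ D / 2)
    (hs : 0.1586 * D - 2.84 ≤ 2 * δ - Nat.card V) : H.IsMinorOf G := by
  obtain ⟨φ, hφ, hX⟩ := exists_placement H G δ hδ hWV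
  refine embed H G φ hφ δ hδ ?_
  have hm' : (2 : ℝ) ≤ Nat.card V := by exact_mod_cast hm
  have hq : (0 : ℝ) ≤ H.edgeSet.ncard := Nat.cast_nonneg _
  have ht : (0 : ℝ) ≤ Nat.card W := Nat.cast_nonneg _
  rify
  set X : ℝ := ({e ∈ H.edgeSet | e.map φ ∉ G.edgeSet}.ncard : ℝ)
  set q : ℝ := (H.edgeSet.ncard : ℝ)
  set t : ℝ := (Nat.card W : ℝ)
  set m : ℝ := (Nat.card V : ℝ)
  set s : ℝ := 2 * δ - m with hs_def
  have hM : 0 < m - 1 := by linarith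
  -- With `m - 1 - δ = (m - 2 - s) / 2`, the density of non-adjacent pairs is
  -- `(1 - (s + 1) / (m - 1)) / 2`, and `m - 1 ≤ D / 2`.
  have h1 : X ≤ q * (1 / 2 - (s + 1) / D) := by
    have h2 : X * (m - 1) ≤ q * ((1 / 2 - (s + 1) / D) * (m - 1)) := by
      refine hX.trans (mul_le_mul_of_nonneg_left ?_ hq)
      have h3 : (s + 1) / D * (m - 1) ≤ (s + 1) / 2 := by
        rw [div_mul_eq_mul_div, div_le_div_iff₀ (by linarith) (by norm_num)]
        nlinarith
      have : (m - 1 - δ : ℝ) = (m - 2 - s) / 2 := by rw [hs_def]; ring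
      rw [this]
      linarith
    rw [← mul_assoc] at h2
    exact le_of_mul_le_mul_right h2 hM
  have h2 : D * X ≤ q * (D / 2 - (s + 1)) := by
    have := mul_le_mul_of_nonneg_left h1 (by linarith : 0 ≤ D)
    refine this.trans (le_of_eq ?_)
    have : D ≠ 0 := by linarith
    field_simp
  have h3 : t + X ≤ s + 4 := by
    have hqD : 2.375 * q ≤ D := by linarith
    have hqs := mul_le_mul_of_nonneg_left hs hq
    have hDs := mul_le_mul_of_nonneg_left hs (by linarith : 0 ≤ D)
    have hqD2 := mul_le_mul_of_nonneg_left hqD (by linarith : 0 ≤ D)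
    have : D * (t + X) ≤ D * (s + 4) := by
      have : t = (D - 2.375 * q) / 7.477 := by rw [hD]; ring
      rw [mul_add, this]
      nlinarith
    exact le_of_mul_le_mul_left this (by linarith)
  linarith

/-! ### The quadratic threshold -/

/-- The edge threshold for the second reduction. The linear coefficient is lowered by `0.52` to absorb
rounding errors. -/
noncomputable def quad (D x : ℝ) : ℝ := 0.085 * x ^ 2 + (0.1835 * D - 0.52) * x - 0.0185 * D ^ 2

/-- The neighbourhood produced by the first reduction, with `n` vertices and minimum degree at least
`D / 2 - 1`, reaches the threshold. -/
theorem quad_start {D n : ℝ} (hD : 14.9 ≤ D) (h1 : D / 2 ≤ n) (h2 : n ≤ D + 0.13) :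
    quad D n ≤ (D / 2 - 1) * n / 2 := by
  unfold quad
  nlinarith

/-- The threshold exceeds the number of edges of a complete graph for orders in
`[0.2 D, 0.2 D + 1)`. -/
theorem quad_barrier {D x : ℝ} (hD : 14.9 ≤ D) (h1 : 0.2 * D ≤ x)
    (h2 : quad D x ≤ x * (x - 1) / 2) : 0.2 * D ≤ x - 1 := by
  unfold quad at h2
  by_contra! h
  nlinarith [mul_nonneg (sub_nonneg.2 h1) (sub_nonneg.2 h.le)]

/-- In a reduced graph on `x` vertices, a vertex of minimum degree `m` has a neighbourhood in which
all degrees `δ` satisfy these bounds. The square completes the arithmetic-geometric mean inequality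
near its minimum `x = √(0.0185 / 0.085) D`. -/
theorem quad_end {D x m δ : ℝ} (hD : 14.9 ≤ D) (h1 : 0.2 * D ≤ x - 1) (h2 : x ≤ D + 0.13)
    (hm : m * x ≤ 2 * quad D x + 2) (hδ : quad D x - quad D (x - 1) - 1 ≤ δ) :
    m - 1 ≤ D / 2 ∧ 0.1586 * D - 2.84 ≤ 2 * δ - m := by
  have hx : 0 < x := by linarith
  unfold quad at hm hδ
  constructor
  · by_contra! h
    nlinarith
  · refine le_of_mul_le_mul_right (a := x) ?_ hx
    nlinarith [sq_nonneg (x - 0.4665 * D)]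

theorem quad_nonneg {D x : ℝ} (hD : 14.9 ≤ D) (h1 : 0.2 * D ≤ x) : 0 ≤ quad D x := by
  unfold quad
  nlinarith

theorem quad_diff {D x : ℝ} (hD : 14.9 ≤ D) (h1 : 0.2 * D ≤ x - 1) :
    0.2175 * D - 0.605 ≤ quad D x - quad D (x - 1) ∧ 0 < 0.2175 * D - 0.605 := by
  unfold quad
  constructor <;> nlinarith

/-! ### The dense minor -/

theorem exists_dense_minor {V : Type u} [Fintype V] [Nonempty V] (G : SimpleGraph V) (D : ℝ)
    (hD : 14.9 ≤ D) (hG : D ≤ G.averageDegree) :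
    ∃ (V' : Type u) (_ : Fintype V') (G' : SimpleGraph V') (δ : ℕ), G'.IsMinorOf G ∧
      (∀ v, δ ≤ (G'.neighborSet v).ncard) ∧ (Nat.card V' : ℝ) - 1 ≤ D / 2 ∧
      0.1586 * D - 2.84 ≤ 2 * δ - Nat.card V' ∧ 0.2175 * D - 0.605 ≤ Nat.card V' := by
  have hn : (1 : ℝ) ≤ Nat.card V := by exact_mod_cast Nat.card_pos
  obtain ⟨V₁, _, G₁, hm₁, -, r₁⟩ := exists_reduced G (fun x => D / 2 * x) 1 hn (by
    rw [averageDegree, le_div_iff₀ (by linarith)] at hG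
    linarith)
  have hV₁ := r₁.le_card
  have : Nonempty V₁ := by
    by_contra h
    rw [not_nonempty_iff] at h
    norm_num [Nat.card_of_isEmpty] at hV₁
  have he₁ := r₁.le_edges
  have he₁' := r₁.edges_lt (by positivity)
  have hc₁ := ncard_edgeSet_le G₁
  have hdeg₁ := r₁.lt_degree
  have htri₁ := r₁.lt_common
  obtain ⟨v, hv⟩ := exists_mul_card_le G₁
  clear r₁
  set n₁ : ℝ := (Nat.card V₁ : ℝ)
  have hn₁ : D ≤ n₁ - 1 := by
    have : D * n₁ ≤ (n₁ - 1) * n₁ := by linarith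
    exact le_of_mul_le_mul_right this (by linarith)
  have hn₀ : D / 2 < (G₁.neighborSet v).ncard := by
    have := hdeg₁ (by linarith) v
    linarith
  have hn₀' : ((G₁.neighborSet v).ncard : ℝ) ≤ D + 0.13 := by
    by_contra! h
    nlinarith
  have : Fintype (G₁.neighborSet v) := Fintype.ofFinite _
  have he₀ := mul_card_le (G₁.induce (G₁.neighborSet v)) (D / 2 - 1) fun x => by
    rw [ncard_neighborSet_induce]
    have := htri₁ (by linarith) v x x.2
    linarith
  rw [Nat.card_coe_set_eq] at he₀
  obtain ⟨V₂, _, G₂, hm₂, hle₂, r₂⟩ := exists_reduced (G₁.induce (G₁.neighborSet v)) (quad D)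
    (0.2 * D) (by rw [Nat.card_coe_set_eq]; linarith) (by
      rw [Nat.card_coe_set_eq]
      have := quad_start hD hn₀.le hn₀'
      linarith)
  have hx : (Nat.card V₂ : ℝ) ≤ D + 0.13 := by
    rw [Nat.card_coe_set_eq] at hle₂
    exact (Nat.cast_le.2 hle₂).trans hn₀'
  have hx' := quad_barrier hD r₂.le_card (r₂.le_edges.trans (ncard_edgeSet_le G₂))
  have : Nonempty V₂ := by
    by_contra h
    rw [not_nonempty_iff] at h
    norm_num [Nat.card_of_isEmpty] at hx'
    linarith
  have he₂ := r₂.edges_lt (quad_nonneg hD r₂.le_card)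
  have hdeg₂ := r₂.lt_degree hx'
  have htri₂ := r₂.lt_common hx'
  have hdiff := quad_diff hD hx'
  obtain ⟨w, hw⟩ := exists_mul_card_le G₂
  have : Fintype (G₂.neighborSet w) := Fintype.ofFinite _
  have : Nonempty (G₂.neighborSet w) := by
    refine Set.nonempty_coe_sort.2 ((Set.ncard_pos (Set.toFinite _)).1 ((Nat.cast_pos (α := ℝ)).1 ?_))
    linarith [hdeg₂ w]
  set J := G₂.induce (G₂.neighborSet w) with hJ
  obtain ⟨z, hz⟩ := Finite.exists_min fun z => (J.neighborSet z).ncard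
  have hδ : quad D (Nat.card V₂) - quad D ((Nat.card V₂ : ℝ) - 1) - 1 ≤
      (J.neighborSet z).ncard := by
    rw [hJ, ncard_neighborSet_induce]
    have := htri₂ w z z.2
    linarith
  obtain ⟨hA, hB⟩ := quad_end (m := (G₂.neighborSet w).ncard) hD hx' hx (by linarith) hδ
  have emb : ∀ {V : Type u} (G : SimpleGraph V) (s : Set V), (G.induce s).IsMinorOf G :=
    fun G s => ofInjective Subtype.val Subtype.val_injective fun _ _ h => h
  refine ⟨G₂.neighborSet w, inferInstance, J, (J.neighborSet z).ncard,
    trans (emb _ _) (trans hm₂ (trans (emb _ _) hm₁)), hz, ?_, ?_, ?_⟩ <;>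
    rw [Nat.card_coe_set_eq]
  · exact hA
  · exact hB
  · linarith [hdeg₂ w]

end SparseMinor

/-- For every graph `H` with `t` vertices and `q` edges, every graph `G` with average
degree at least `7.477t + 2.375q` contains `H` as a minor. -/
theorem q_main {W V : Type*} [Fintype W] [Fintype V] [Nonempty V]
    (H : SimpleGraph W) (G : SimpleGraph V)
    (h : 7.477 * (Nat.card W : ℝ) + 2.375 * (H.edgeSet.ncard : ℝ) ≤ G.averageDegree) :
    H.IsMinorOf G := by
  rcases Nat.lt_or_ge (Nat.card W) 2 with ht | ht
  · have : Subsingleton W := Finite.card_le_one_iff_subsingleton.1 (by omega)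
    obtain ⟨v⟩ := ‹Nonempty V›
    exact SparseMinor.ofInjective (fun _ => v) (Function.injective_of_subsingleton _)
      fun x y hxy => (hxy.ne (Subsingleton.elim x y)).elim
  · have ht' : (2 : ℝ) ≤ Nat.card W := by exact_mod_cast ht
    have hq : (0 : ℝ) ≤ H.edgeSet.ncard := Nat.cast_nonneg _
    obtain ⟨V', _, G', δ, hm, hδ, h1, h2, h3⟩ :=
      SparseMinor.exists_dense_minor G _ (by linarith) h
    have hWV : Nat.card W ≤ Nat.card V' := by
      have : (Nat.card W : ℝ) ≤ Nat.card V' := by linarith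
      exact_mod_cast this
    exact SparseMinor.trans (SparseMinor.isMinorOf_of_degree H G' δ hδ _ rfl (by linarith)
      (ht.trans hWV) hWV h1 h2) hm
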